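/- arXiv:2302.04361 — 3 statements merged into one kernel-verified Lean document; each statement's English description precedes it below -/
import Mathlib

section
/- Let g, h : ℝ → ℝ be convex and differentiable, let c > 0 and κ > 0 be constants, and define the exact update map F(γ, i) = γ + c·(g(i − γ) − h(i − γ) − κ·cos γ). Let B = [γ̲, γ̄] × [i̲, ī] be a box with [γ̲, γ̄] ⊆ [−π/2, π/2], and let (γ⁰, i⁰) be a reference point. Define the majorant ψ(γ, i) = γ + c·(g(i − γ) − h(i⁰ − γ⁰) − h′(i⁰ − γ⁰)·(i − γ − (i⁰ − γ⁰)) − κ·cos γ). Then for every (γ, i) ∈ B, F(γ, i) ≤ max over the four vertices (γᵥ, iᵥ) ∈ {γ̲, γ̄} × {i̲, ī} of ψ(γᵥ, iᵥ). -/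
/-!
The tangent of the convex function `h` at `i0 - γ0` lies below `h` (`tangent_le`), so `F ≤ ψ`
pointwise. The majorant `ψ` is convex in each variable separately: `g` is convex along affine maps,
the tangent term is affine, and `-cos` is convex on `[-π/2, π/2]`. A convex function on an interval
is bounded by its larger endpoint value, and applying this first in `γ` and then in `i` bounds `ψ`
on the box by its values at the vertices; joint convexity is not needed.
-/

lemma tangent_le {h : ℝ → ℝ} (hh : ConvexOn ℝ Set.univ h) (hhd : Differentiable ℝ h) (t s : ℝ) :
    h t + deriv h t * (s - t) ≤ h s := by
  rcases lt_trichotomy t s with hts | rfl | hts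
  · have := hh.deriv_le_slope (Set.mem_univ t) (Set.mem_univ s) hts (hhd t)
    rw [slope_def_field, le_div_iff₀ (sub_pos.2 hts)] at this
    linarith
  · simp
  · have := hh.slope_le_deriv (Set.mem_univ s) (Set.mem_univ t) hts (hhd t)
    rw [slope_def_field, div_le_iff₀ (sub_pos.2 hts)] at this
    linarith

/-- Tube upper-bound inequality (eq. 29): for a difference-of-convex update map
`F(γ, i) = γ + c·(g(i−γ) − h(i−γ) − κ·cos γ)`, replacing the convex function `h` by its
tangent at a reference point gives a majorant `ψ` whose maximum over the four vertices of
the box bounds `F` over the whole box. -/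
theorem tube_upper_bound
    (g h : ℝ → ℝ)
    (hg : ConvexOn ℝ Set.univ g) (hh : ConvexOn ℝ Set.univ h)
    (hgd : Differentiable ℝ g) (hhd : Differentiable ℝ h)
    (c κ : ℝ) (hc : 0 < c) (hκ : 0 < κ)
    (γlo γhi ilo ihi γ0 i0 : ℝ)
    (hlo : -(Real.pi / 2) ≤ γlo) (hhi : γhi ≤ Real.pi / 2)
    (F : ℝ → ℝ → ℝ)
    (hF : ∀ γ i, F γ i = γ + c * (g (i - γ) - h (i - γ) - κ * Real.cos γ))
    (ψ : ℝ → ℝ → ℝ)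
    (hψ : ∀ γ i, ψ γ i = γ + c * (g (i - γ) - h (i0 - γ0)
      - deriv h (i0 - γ0) * (i - γ - (i0 - γ0)) - κ * Real.cos γ)) :
    ∀ γ i, γ ∈ Set.Icc γlo γhi → i ∈ Set.Icc ilo ihi →
      F γ i ≤ max (max (ψ γlo ilo) (ψ γlo ihi)) (max (ψ γhi ilo) (ψ γhi ihi)) := by
  intro γ i hγ hi
  have hFψ : F γ i ≤ ψ γ i := by
    rw [hF, hψ]
    have := tangent_le hh hhd (i0 - γ0) (i - γ)
    refine add_le_add_right (mul_le_mul_of_nonneg_left ?_ hc.le) γ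
    linarith
  have convex_γ : ∀ j, ConvexOn ℝ (Set.Icc γlo γhi) (fun x => ψ x j) := by
    intro j
    refine ⟨convex_Icc _ _, fun x hx y hy a b ha hb hab => ?_⟩
    have h1 := hg.2 (Set.mem_univ (j - x)) (Set.mem_univ (j - y)) ha hb hab
    have h2 := strictConcaveOn_cos_Icc.concaveOn.2
      (Set.Icc_subset_Icc hlo hhi hx) (Set.Icc_subset_Icc hlo hhi hy) ha hb hab
    obtain rfl : b = 1 - a := by linarith
    simp only [smul_eq_mul, hψ] at h1 h2 ⊢
    rw [show a * (j - x) + (1 - a) * (j - y) = j - (a * x + (1 - a) * y) by ring] at h1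
    have h3 := mul_le_mul_of_nonneg_left
      (add_le_add h1 (mul_le_mul_of_nonneg_left (neg_le_neg h2) hκ.le)) hc.le
    linarith
  have convex_i : ∀ x, ConvexOn ℝ (Set.Icc ilo ihi) (fun j => ψ x j) := by
    intro x
    refine ⟨convex_Icc _ _, fun j _ k _ a b ha hb hab => ?_⟩
    have h1 := hg.2 (Set.mem_univ (j - x)) (Set.mem_univ (k - x)) ha hb hab
    obtain rfl : b = 1 - a := by linarith
    simp only [smul_eq_mul, hψ] at h1 ⊢
    rw [show a * (j - x) + (1 - a) * (k - x) = a * j + (1 - a) * k - x by ring] at h1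
    have h3 := mul_le_mul_of_nonneg_left h1 hc.le
    linarith
  have edge : ∀ x, ψ x i ≤ max (ψ x ilo) (ψ x ihi) := fun x =>
    (convex_i x).le_max_of_mem_Icc (Set.left_mem_Icc.2 (hi.1.trans hi.2))
      (Set.right_mem_Icc.2 (hi.1.trans hi.2)) hi
  calc F γ i ≤ ψ γ i := hFψ
    _ ≤ max (ψ γlo i) (ψ γhi i) :=
      (convex_γ i).le_max_of_mem_Icc (Set.left_mem_Icc.2 (hγ.1.trans hγ.2))
        (Set.right_mem_Icc.2 (hγ.1.trans hγ.2)) hγ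
    _ ≤ _ := max_le_max (edge γlo) (edge γhi)
end

section
/- Let g, h : ℝ → ℝ be convex and differentiable, let c > 0 and κ > 0 be constants, and define the exact update map F(γ, i) = γ + c·(g(i − γ) − h(i − γ) − κ·cos γ). Let B = [γ̲, γ̄] × [i̲, ī] be a box with [γ̲, γ̄] ⊆ [−π/2, π/2], and let (γ⁰, i⁰) be a reference point with γ⁰ ∈ [−π/2, π/2]. Define the minorant φ(γ, i) = γ + c·(g(i⁰ − γ⁰) + g′(i⁰ − γ⁰)·(i − γ − (i⁰ − γ⁰)) − h(i − γ) − κ·cos γ⁰ + κ·sin γ⁰·(γ − γ⁰)). Then for every (γ, i) ∈ B, F(γ, i) ≥ min over the four vertices (γᵥ, iᵥ) ∈ {γ̲, γ̄} × {i̲, ī} of φ(γᵥ, iᵥ). -/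
/-! A convex function lies above its tangents (`tangent_le_of_convexOn`). Applied to `g` on `ℝ` and
to `-cos` on `[-π/2, π/2]`, this gives `φ ≤ F` on the box. In each variable separately, `φ` is an
affine function minus a positive multiple of `h` composed with an affine map, hence concave
(`concaveOn_affine_sub_comp`), and a concave function on an interval is bounded below by the
smaller of its endpoint values. Using this in `γ` and then in `i` reduces the bound to the four
vertices; joint concavity is not needed. -/

theorem tangent_le_of_convexOn {S : Set ℝ} {f : ℝ → ℝ} {f' x y : ℝ} (hf : ConvexOn ℝ S f)
    (hx : x ∈ S) (hy : y ∈ S) (hd : HasDerivAt f f' x) : f x + f' * (y - x) ≤ f y := by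
  rcases lt_trichotomy x y with hxy | rfl | hxy
  · have := hf.le_slope_of_hasDerivAt hx hy hxy hd
    rw [slope_def_field, le_div_iff₀ (sub_pos.2 hxy)] at this
    linarith
  · simp
  · have := hf.slope_le_of_hasDerivAt hy hx hxy hd
    rw [slope_def_field, div_le_iff₀ (sub_pos.2 hxy)] at this
    linarith

theorem concaveOn_affine_sub_comp {h : ℝ → ℝ} (hh : ConvexOn ℝ Set.univ h) {c : ℝ} (hc : 0 ≤ c)
    (A B s d : ℝ) : ConcaveOn ℝ Set.univ (fun t => A + B * t - c * h (s * t + d)) := by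
  refine ⟨convex_univ, fun x _ y _ a b ha hb hab => ?_⟩
  have key := hh.2 (Set.mem_univ (s * x + d)) (Set.mem_univ (s * y + d)) ha hb hab
  simp only [smul_eq_mul] at key ⊢
  have hb' : b = 1 - a := by linarith
  subst hb'
  rw [show a * (s * x + d) + (1 - a) * (s * y + d) = s * (a * x + (1 - a) * y) + d by ring] at key
  have := mul_le_mul_of_nonneg_left key hc
  linarith

/-- Tube lower-bound inequality (eq. 30): replacing the convex functions `g` and
`γ ↦ −κ·cos γ` by their tangents at the reference point gives a minorant `φ` whose
minimum over the four vertices of the box lower-bounds `F` over the whole box. -/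
theorem tube_lower_bound
    (g h : ℝ → ℝ)
    (hg : ConvexOn ℝ Set.univ g) (hh : ConvexOn ℝ Set.univ h)
    (hgd : Differentiable ℝ g) (hhd : Differentiable ℝ h)
    (c κ : ℝ) (hc : 0 < c) (hκ : 0 < κ)
    (γlo γhi ilo ihi γ0 i0 : ℝ)
    (hlo : -(Real.pi / 2) ≤ γlo) (hhi : γhi ≤ Real.pi / 2)
    (hγ0 : γ0 ∈ Set.Icc (-(Real.pi / 2)) (Real.pi / 2))
    (F : ℝ → ℝ → ℝ)
    (hF : ∀ γ i, F γ i = γ + c * (g (i - γ) - h (i - γ) - κ * Real.cos γ))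
    (φ : ℝ → ℝ → ℝ)
    (hφ : ∀ γ i, φ γ i = γ + c * (g (i0 - γ0)
      + deriv g (i0 - γ0) * (i - γ - (i0 - γ0)) - h (i - γ)
      - κ * Real.cos γ0 + κ * Real.sin γ0 * (γ - γ0))) :
    ∀ γ i, γ ∈ Set.Icc γlo γhi → i ∈ Set.Icc ilo ihi →
      min (min (φ γlo ilo) (φ γlo ihi)) (min (φ γhi ilo) (φ γhi ihi)) ≤ F γ i := by
  intro γ i hγ hi
  have hφF : φ γ i ≤ F γ i := by
    have h1 := tangent_le_of_convexOn hg (Set.mem_univ (i0 - γ0)) (Set.mem_univ (i - γ))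
      (hgd _).hasDerivAt
    have h2 := tangent_le_of_convexOn strictConcaveOn_cos_Icc.concaveOn.neg hγ0
      (⟨hlo.trans hγ.1, hγ.2.trans hhi⟩ : γ ∈ Set.Icc (-(Real.pi / 2)) (Real.pi / 2))
      (Real.hasDerivAt_cos γ0).neg
    simp only [Pi.neg_apply, neg_neg] at h2
    have h3 := mul_le_mul_of_nonneg_left h2 hκ.le
    rw [hφ, hF]
    gcongr γ + c * ?_
    linarith
  have hconcγ : ∀ j, ConcaveOn ℝ Set.univ (fun t => φ t j) := by
    intro j
    convert concaveOn_affine_sub_comp hh hc.le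
      (c * (g (i0 - γ0) + deriv g (i0 - γ0) * (j - (i0 - γ0))
        - κ * Real.cos γ0 - κ * Real.sin γ0 * γ0))
      (1 + c * (κ * Real.sin γ0 - deriv g (i0 - γ0))) (-1) j using 2 with t
    rw [hφ, show -1 * t + j = j - t by ring]
    ring
  have hconci : ∀ t, ConcaveOn ℝ Set.univ (fun j => φ t j) := by
    intro t
    convert concaveOn_affine_sub_comp hh hc.le
      (t + c * (g (i0 - γ0) + deriv g (i0 - γ0) * (-t - (i0 - γ0))
        - κ * Real.cos γ0 + κ * Real.sin γ0 * (t - γ0)))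
      (c * deriv g (i0 - γ0)) 1 (-t) using 2 with j
    rw [hφ, show 1 * j + -t = j - t by ring]
    ring
  have hγmin := (hconcγ i).min_le_of_mem_Icc (Set.mem_univ γlo) (Set.mem_univ γhi) hγ
  have himin := fun t => (hconci t).min_le_of_mem_Icc (Set.mem_univ ilo) (Set.mem_univ ihi) hi
  exact ((min_le_min (himin γlo) (himin γhi)).trans hγmin).trans hφF
end

section
/- Every polynomial function p : ℝ → ℝ can be written as p = g − h where g : ℝ → ℝ and h : ℝ → ℝ are convex polynomial functions on all of ℝ. -/
/-!
The second derivative of `p` is a difference of two squares of polynomials,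
`p'' = ((p'' + 1) / 2) ^ 2 - ((p'' - 1) / 2) ^ 2`. Let `h` be a second antiderivative of the second
square and `g = p + h`. Then `g''` is the first square, so `g` and `h` both have nonnegative second
derivative and are convex.
-/

/-- Over the reals every polynomial has a polynomial antiderivative. -/
lemma exists_derivative_eq (q : Polynomial ℝ) : ∃ r : Polynomial ℝ, r.derivative = q := by
  induction q using Polynomial.induction_on' with
  | add a b ha hb =>
    obtain ⟨r, rfl⟩ := ha
    obtain ⟨s, rfl⟩ := hb
    exact ⟨r + s, Polynomial.derivative_add⟩
  | monomial n a =>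
    refine ⟨Polynomial.monomial (n + 1) (a / (n + 1)), ?_⟩
    rw [Polynomial.derivative_monomial]
    have : (n : ℝ) + 1 ≠ 0 := by positivity
    congr 1
    push_cast
    field_simp

lemma convexOn_eval_of_derivative_nonneg (q : Polynomial ℝ)
    (hq : ∀ x, 0 ≤ q.derivative.derivative.eval x) :
    ConvexOn ℝ Set.univ (fun x => q.eval x) := by
  have hd : ∀ r : Polynomial ℝ, deriv (fun x => r.eval x) = fun x => r.derivative.eval x :=
    fun r => funext fun x => r.deriv
  refine convexOn_univ_of_deriv2_nonneg q.differentiable ?_ fun x => ?_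
  · rw [hd]
    exact q.derivative.differentiable
  · simpa [hd] using hq x

/-- DC decomposition of polynomials: every polynomial function `p : ℝ → ℝ` can be written
as the difference `g − h` of two polynomial functions that are convex on all of `ℝ`. -/
theorem polynomial_dc_decomposition (p : Polynomial ℝ) :
    ∃ g h : Polynomial ℝ,
      ConvexOn ℝ Set.univ (fun x => g.eval x) ∧
      ConvexOn ℝ Set.univ (fun x => h.eval x) ∧
      ∀ x : ℝ, p.eval x = g.eval x - h.eval x := by
  obtain ⟨s, hs⟩ := exists_derivative_eq
    ((Polynomial.C (1 / 2) * (p.derivative.derivative - 1)) ^ 2)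
  obtain ⟨h, rfl⟩ := exists_derivative_eq s
  refine ⟨p + h, h, convexOn_eval_of_derivative_nonneg _ fun x => ?_,
    convexOn_eval_of_derivative_nonneg _ fun x => ?_, fun x => by simp⟩
  · rw [Polynomial.derivative_add, Polynomial.derivative_add, hs]
    simp only [Polynomial.eval_add, Polynomial.eval_pow, Polynomial.eval_mul, Polynomial.eval_C,
      Polynomial.eval_sub, Polynomial.eval_one]
    nlinarith [sq_nonneg (p.derivative.derivative.eval x + 1)]
  · rw [hs, Polynomial.eval_pow]
    positivity
end
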